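/- There exist ε₀ > 0 and σ > 0, depending only on N, p and κ but not on the particular admissible coefficients, such that for every admissible pair (A, m) with constant κ and every u ∈ ℝ^N with u ≥ 0, g(u) ≠ 0 and v(u) < ε₀, there exists an index i ∈ {1,…,N} with f_i(u) > σ. -/

import Mathlib

/-!
In homogeneous coordinates `s = (1, u) / (1 + ∑ u_i)` on the standard simplex, `f` becomes the
homogeneous function `F_i(s) = s₀ m_i - ∑ a_ij s_j`. The pairs `(A, m)` and the points `s` range
over compact sets, so unbounded `u` (that is, `s₀ → 0`) needs no separate treatment.

Let `I` be the support of `(s_1, …, s_N)` and let `j ∉ I`. If `F` vanishes on `I`, then eliminating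
`s_I` from these equations gives `s₀ Δ_{I,j} = F_j Δ_I`; moreover `s₀ > 0`, since `s₀ = 0` would
force `s_I = 0` by invertibility of `A_I`. Hence `F_j > 0`. So at every point of the compact set one
of three open conditions holds: all `s_j > 0`, or some `F_i > 0`, or some `s_i |F_i|^p > 0`. By
compactness they hold with a uniform margin `ε`: all `s_j > ε`, or some `F_i > ε`, or some
`s_i |F_i|^p > ε ∑ |F_j|^p`. After the normalization is undone, the first alternative makes the
weighted mean `v(u)` of the `u_i` at least `ε`, and the third does so by a single term of it.
-/

open MeasureTheory Filter

/-- Principal minor of `A` over the index set `I`. -/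
noncomputable def minorP {N : ℕ} (A : Matrix (Fin N) (Fin N) ℝ) (I : Finset (Fin N)) : ℝ :=
  Matrix.det (Matrix.of fun i j : {x : Fin N // x ∈ I} => A i.1 j.1)

/-- The determinant `Δ_{I,j}` obtained by bordering the principal minor over `I`
with the column `m` and the row `j`. -/
noncomputable def minorM {N : ℕ} (A : Matrix (Fin N) (Fin N) ℝ) (m : Fin N → ℝ)
    (I : Finset (Fin N)) (j : Fin N) : ℝ :=
  Matrix.det (Matrix.of fun k l : Option {x : Fin N // x ∈ I} =>
    match k, l with
    | some k', some l' => A k'.1 l'.1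
    | some k', none => m k'.1
    | none, some l' => A j l'.1
    | none, none => m j)

/-- An admissible pair of coefficients with constant `κ`:
entries of `A` and `m` bounded by `1/κ`, all principal minors `Δ_I ≥ κ`,
and all bordered determinants `Δ_{I,j} ≥ κ` for `j ∉ I`. -/
def IsAdmissible {N : ℕ} (κ : ℝ) (A : Matrix (Fin N) (Fin N) ℝ) (m : Fin N → ℝ) : Prop :=
  (∀ i j, |A i j| ≤ 1 / κ) ∧ (∀ i, m i ≤ 1 / κ) ∧
    (∀ I : Finset (Fin N), κ ≤ minorP A I) ∧
    (∀ I : Finset (Fin N), ∀ j ∉ I, κ ≤ minorM A m I j)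

/-- `f_i(u) = m_i − Σ_j a_{ij} u_j`. -/
def fComp {N : ℕ} (A : Matrix (Fin N) (Fin N) ℝ) (m : Fin N → ℝ) (u : Fin N → ℝ)
    (i : Fin N) : ℝ :=
  m i - ∑ j, A i j * u j

open Matrix Topology

/-- The homogenization `s₀ m_i - ∑ a_ij s_j` of `f_i`; the homogenizing coordinate `s₀` is
`s none`. -/
def homComp {N : ℕ} (A : Matrix (Fin N) (Fin N) ℝ) (m : Fin N → ℝ) (s : Option (Fin N) → ℝ)
    (i : Fin N) : ℝ :=
  s none * m i - ∑ j, A i j * s (some j)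

section BorderedDeterminant

lemma det_fromBlocks_mul_of_mulVec_eq_smul {n R : Type*} [Fintype n] [DecidableEq n] [CommRing R]
    {M : Matrix n n R} {b x : n → R} {t : R} (hx : M *ᵥ x = t • b) (c : n → R) (d : R) :
    (fromBlocks M (replicateCol Unit b) (replicateRow Unit c) (of fun _ _ => d)).det * t =
      M.det * (t * d - c ⬝ᵥ x) := by
  have hmul : fromBlocks M (replicateCol Unit b) (replicateRow Unit c) (of fun _ _ => d) *
      fromBlocks 1 (replicateCol Unit (-x)) 0 (of fun _ _ => t) =
      fromBlocks M 0 (replicateRow Unit c) (of fun _ _ => t * d - c ⬝ᵥ x) := by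
    rw [fromBlocks_multiply, ← replicateCol_mulVec, mulVec_neg, hx]
    congr 1
    · simp
    · ext i
      simp [mul_apply, mul_comm]
    · simp
    · ext
      rw [Matrix.add_apply, replicateRow_mul_replicateCol_apply, dotProduct_neg, neg_add_eq_sub]
      simp [mul_apply, mul_comm]
  simpa using congrArg det hmul

variable {N : ℕ} {A : Matrix (Fin N) (Fin N) ℝ} {m : Fin N → ℝ} {I : Finset (Fin N)}
  {s : Option (Fin N) → ℝ}

lemma minorM_eq_det_fromBlocks (j : Fin N) :
    minorM A m I j =
      (fromBlocks (A.submatrix ((↑) : I → Fin N) (↑)) (replicateCol Unit fun k : I => m k)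
        (replicateRow Unit fun l : I => A j l) (of fun _ _ => m j)).det := by
  rw [minorM, ← det_reindex_self (Equiv.optionEquivSumPUnit.{0} I)]
  congr 1
  ext (_ | _) (_ | _) <;> rfl

lemma homComp_eq_sub_dotProduct (hI : ∀ i ∉ I, s (some i) = 0) (i : Fin N) :
    homComp A m s i =
      s none * m i - (fun l : I => A i l) ⬝ᵥ fun l : I => s (some l) := by
  rw [homComp, dotProduct, Finset.sum_coe_sort I fun l => A i l * s (some l),
    Finset.sum_subset I.subset_univ fun l _ hl => by rw [hI l hl, mul_zero]]

lemma submatrix_mulVec_eq_smul (hI : ∀ i ∉ I, s (some i) = 0)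
    (hF : ∀ i ∈ I, homComp A m s i = 0) :
    (A.submatrix ((↑) : I → Fin N) (↑)) *ᵥ (fun l : I => s (some l)) =
      s none • fun k : I => m k := by
  ext k
  have hk := hF k k.2
  rw [homComp_eq_sub_dotProduct hI, sub_eq_zero] at hk
  exact hk.symm

lemma minorM_mul_eq_minorP_mul_homComp (hI : ∀ i ∉ I, s (some i) = 0)
    (hF : ∀ i ∈ I, homComp A m s i = 0) (j : Fin N) :
    minorM A m I j * s none = minorP A I * homComp A m s j := by
  rw [minorM_eq_det_fromBlocks, homComp_eq_sub_dotProduct hI,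
    det_fromBlocks_mul_of_mulVec_eq_smul (submatrix_mulVec_eq_smul hI hF)]
  rfl

lemma eq_zero_of_homComp_eq_zero (hI : ∀ i ∉ I, s (some i) = 0)
    (hF : ∀ i ∈ I, homComp A m s i = 0) (hminor : minorP A I ≠ 0) (hs : s none = 0) : s = 0 := by
  have hker := submatrix_mulVec_eq_smul hI hF
  rw [hs, zero_smul] at hker
  have hsI := eq_zero_of_mulVec_eq_zero hminor hker
  ext (_ | i)
  · exact hs
  · by_cases hi : i ∈ I
    · exact congrFun hsI ⟨i, hi⟩
    · exact hI i hi

end BorderedDeterminant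

section Positivity

variable {N : ℕ} {κ : ℝ} {A : Matrix (Fin N) (Fin N) ℝ} {m : Fin N → ℝ}
  {s : Option (Fin N) → ℝ}

lemma homComp_pos_of_isAdmissible (hκ : 0 < κ) (hA : IsAdmissible κ A m) (hs₀ : 0 ≤ s none)
    (hs : s ≠ 0) (hF : ∀ i, s (some i) ≠ 0 → homComp A m s i = 0) {j : Fin N}
    (hj : s (some j) = 0) : 0 < homComp A m s j := by
  obtain ⟨-, -, hP, hM⟩ := hA
  let I : Finset (Fin N) := {i | s (some i) ≠ 0}
  have hI : ∀ i ∉ I, s (some i) = 0 := by simp [I]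
  have hFI : ∀ i ∈ I, homComp A m s i = 0 := fun i hi => hF i (Finset.mem_filter.mp hi).2
  have hPI : 0 < minorP A I := hκ.trans_le (hP I)
  have hMI : 0 < minorM A m I j := hκ.trans_le (hM I j (by simp [I, hj]))
  have hs₀_pos : 0 < s none :=
    hs₀.lt_of_ne' fun h => hs (eq_zero_of_homComp_eq_zero hI hFI hPI.ne' h)
  have hprod : 0 < minorP A I * homComp A m s j := by
    rw [← minorM_mul_eq_minorP_mul_homComp hI hFI]
    exact mul_pos hMI hs₀_pos
  exact pos_of_mul_pos_right hprod hPI.le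

lemma forall_pos_or_homComp_pos_or_homComp_ne_zero (hκ : 0 < κ) (hA : IsAdmissible κ A m)
    (hs : s ∈ stdSimplex ℝ (Option (Fin N))) :
    (∀ j, 0 < s (some j)) ∨ (∃ i, 0 < homComp A m s i) ∨
      ∃ i, 0 < s (some i) ∧ homComp A m s i ≠ 0 := by
  have hs_ne : s ≠ 0 := by
    rintro rfl
    simpa using hs.2
  by_contra! ⟨⟨j, hj⟩, hF_nonpos, hF_zero⟩
  have hF : ∀ i, s (some i) ≠ 0 → homComp A m s i = 0 :=
    fun i hi => hF_zero i ((hs.1 _).lt_of_ne' hi)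
  exact (hF_nonpos j).not_gt
    (homComp_pos_of_isAdmissible hκ hA (hs.1 none) hs_ne hF (hj.antisymm (hs.1 _)))

end Positivity

section Compactness

variable {N : ℕ}

lemma continuous_minorP (I : Finset (Fin N)) :
    Continuous fun A : Matrix (Fin N) (Fin N) ℝ => minorP A I :=
  (continuous_id.matrix_submatrix _ _).matrix_det

lemma continuous_minorM (I : Finset (Fin N)) (j : Fin N) :
    Continuous fun q : Matrix (Fin N) (Fin N) ℝ × (Fin N → ℝ) => minorM q.1 q.2 I j := by
  refine Continuous.matrix_det (continuous_matrix fun k l => ?_)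
  rcases k with _ | k <;> rcases l with _ | l <;> simp only [of_apply] <;> fun_prop

lemma continuous_homComp (i : Fin N) :
    Continuous fun y : (Matrix (Fin N) (Fin N) ℝ × (Fin N → ℝ)) × (Option (Fin N) → ℝ) =>
      homComp y.1.1 y.1.2 y.2 i := by
  unfold homComp
  fun_prop

lemma minorM_empty (A : Matrix (Fin N) (Fin N) ℝ) (m : Fin N → ℝ) (j : Fin N) :
    minorM A m ∅ j = m j := by
  rw [minorM, det_unique]
  rfl

lemma isClosed_setOf_isAdmissible (N : ℕ) (κ : ℝ) :
    IsClosed {q : Matrix (Fin N) (Fin N) ℝ × (Fin N → ℝ) | IsAdmissible κ q.1 q.2} := by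
  simp only [IsAdmissible, Set.ofPred_and, Set.ofPred_forall]
  refine .inter (isClosed_iInter fun i => isClosed_iInter fun j => ?_) <|
    .inter (isClosed_iInter fun i => ?_) <| .inter (isClosed_iInter fun I => ?_) <|
    isClosed_iInter fun I => isClosed_iInter fun j => isClosed_iInter fun _ => ?_
  · exact isClosed_le (by fun_prop) continuous_const
  · exact isClosed_le (by fun_prop) continuous_const
  · exact isClosed_le continuous_const ((continuous_minorP I).comp continuous_fst)
  · exact isClosed_le continuous_const (continuous_minorM I j)

lemma isCompact_setOf_isAdmissible (N : ℕ) (κ : ℝ) :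
    IsCompact {q : Matrix (Fin N) (Fin N) ℝ × (Fin N → ℝ) | IsAdmissible κ q.1 q.2} := by
  have hbox : IsCompact ((Set.Icc (-(1 / κ)) (1 / κ)).matrix ×ˢ
      Set.univ.pi fun _ => Set.Icc κ (1 / κ) :
      Set (Matrix (Fin N) (Fin N) ℝ × (Fin N → ℝ))) :=
    isCompact_Icc.matrix.prod (isCompact_univ_pi fun _ => isCompact_Icc)
  refine hbox.of_isClosed_subset (isClosed_setOf_isAdmissible N κ) ?_
  rintro ⟨A, m⟩ ⟨hA, hm, -, hM⟩
  have hm_ge (i : Fin N) : κ ≤ m i := minorM_empty A m i ▸ hM ∅ i (Finset.notMem_empty i)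
  exact ⟨fun i j => abs_le.mp (hA i j), fun i _ => ⟨hm_ge i, hm i⟩⟩

lemma exists_uniform_lt_or_lt_homComp_or_lt_mul {p κ : ℝ} (N : ℕ) (hp : 0 ≤ p) (hκ : 0 < κ) :
    ∃ ε > 0, ∀ (A : Matrix (Fin N) (Fin N) ℝ) (m : Fin N → ℝ), IsAdmissible κ A m →
      ∀ s ∈ stdSimplex ℝ (Option (Fin N)),
        (∀ j, ε < s (some j)) ∨ (∃ i, ε < homComp A m s i) ∨
          ∃ i, ε * ∑ j, |homComp A m s j| ^ p < s (some i) * |homComp A m s i| ^ p := by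
  let K := {q : Matrix (Fin N) (Fin N) ℝ × (Fin N → ℝ) | IsAdmissible κ q.1 q.2} ×ˢ
    stdSimplex ℝ (Option (Fin N))
  have hK : IsCompact K := (isCompact_setOf_isAdmissible N κ).prod (isCompact_stdSimplex ℝ _)
  have hev : ∀ᶠ ε : ℝ in 𝓝 0, ∀ y ∈ K,
      (∀ j, ε < y.2 (some j)) ∨ (∃ i, ε < homComp y.1.1 y.1.2 y.2 i) ∨
        ∃ i, ε * ∑ j, |homComp y.1.1 y.1.2 y.2 j| ^ p <
          y.2 (some i) * |homComp y.1.1 y.1.2 y.2 i| ^ p := by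
    refine hK.eventually_forall_of_forall_eventually fun y hy => ?_
    have hF (i : Fin N) := (continuous_homComp i).comp (continuous_snd (X := ℝ))
    have hFp (i : Fin N) := (hF i).abs.rpow_const fun _ => Or.inr hp
    rcases forall_pos_or_homComp_pos_or_homComp_ne_zero hκ hy.1 hy.2 with
      hpos | ⟨i, hi⟩ | ⟨i, hsi, hFi⟩
    · refine .mono (Filter.eventually_all.mpr fun j => ?_) fun _ => Or.inl
      exact (continuous_fst.tendsto _).eventually_lt
        (Continuous.tendsto (by fun_prop) _) (hpos j)
    · refine .mono ?_ fun _ h => Or.inr (Or.inl ⟨i, h⟩)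
      exact (continuous_fst.tendsto _).eventually_lt ((hF i).tendsto _) hi
    · refine .mono ?_ fun _ h => Or.inr (Or.inr ⟨i, h⟩)
      refine Filter.Tendsto.eventually_lt
        ((continuous_fst.mul (continuous_finsetSum _ fun j _ => hFp j)).tendsto _)
        ((Continuous.mul (by fun_prop) (hFp i)).tendsto _) ?_
      simpa using mul_pos hsi (Real.rpow_pos_of_pos (abs_pos.mpr hFi) p)
  obtain ⟨ε, hε, hε_pos⟩ := ((hev.filter_mono nhdsWithin_le_nhds).and
    (self_mem_nhdsWithin (s := Set.Ioi (0 : ℝ)))).exists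
  exact ⟨ε, hε_pos, fun A m hA s hs => hε ((A, m), s) ⟨hA, hs⟩⟩

end Compactness

section Normalization

variable {N : ℕ}

/-- The homogeneous coordinates `(1, u)` of `u`, divided by `1 + ∑ u_i` so as to lie in the standard
simplex when `u ≥ 0`. As in `homComp`, the homogenizing coordinate is `none`. -/
noncomputable def simplexPoint (u : Fin N → ℝ) : Option (Fin N) → ℝ :=
  (1 + ∑ i, u i)⁻¹ • fun o => o.elim 1 u

lemma simplexPoint_mem_stdSimplex {u : Fin N → ℝ} (hu : ∀ i, 0 ≤ u i) :
    simplexPoint u ∈ stdSimplex ℝ (Option (Fin N)) := by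
  have hsum : 0 < 1 + ∑ i, u i :=
    add_pos_of_pos_of_nonneg one_pos (Finset.sum_nonneg fun i _ => hu i)
  constructor
  · rintro (_ | i)
    · exact mul_nonneg (inv_nonneg.mpr hsum.le) zero_le_one
    · exact mul_nonneg (inv_nonneg.mpr hsum.le) (hu i)
  · simp only [simplexPoint, Pi.smul_apply, smul_eq_mul, ← Finset.mul_sum]
    rw [Fintype.sum_option]
    exact inv_mul_cancel₀ hsum.ne'

lemma homComp_simplexPoint (A : Matrix (Fin N) (Fin N) ℝ) (m u : Fin N → ℝ) (i : Fin N) :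
    homComp A m (simplexPoint u) i = (1 + ∑ i, u i)⁻¹ * fComp A m u i := by
  simp only [homComp, simplexPoint, fComp, Pi.smul_apply, Option.elim, smul_eq_mul, mul_one,
    mul_sub, Finset.mul_sum, mul_left_comm]

lemma exists_uniform_lt_or_lt_fComp_or_lt_mul {p κ : ℝ} (N : ℕ) (hp : 0 ≤ p) (hκ : 0 < κ) :
    ∃ ε > 0, ∀ (A : Matrix (Fin N) (Fin N) ℝ) (m : Fin N → ℝ), IsAdmissible κ A m →
      ∀ u : Fin N → ℝ, (∀ i, 0 ≤ u i) →
        (∀ j, ε < u j) ∨ (∃ i, ε < fComp A m u i) ∨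
          ∃ i, ε * ∑ j, |fComp A m u j| ^ p < u i * |fComp A m u i| ^ p := by
  obtain ⟨ε, hε, h⟩ := exists_uniform_lt_or_lt_homComp_or_lt_mul N hp hκ
  refine ⟨ε, hε, fun A m hA u hu => ?_⟩
  have h1 : 1 ≤ 1 + ∑ i, u i := le_add_of_nonneg_right (Finset.sum_nonneg fun i _ => hu i)
  have hu_mem := h A m hA _ (simplexPoint_mem_stdSimplex hu)
  simp only [homComp_simplexPoint] at hu_mem
  simp only [simplexPoint, Pi.smul_apply, Option.elim, smul_eq_mul] at hu_mem
  set t := (1 + ∑ i, u i)⁻¹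
  have ht : 0 < t := inv_pos.mpr (zero_lt_one.trans_le h1)
  have ht1 : t ≤ 1 := inv_le_one_of_one_le₀ h1
  have lt_of_lt_mul {c x : ℝ} (hc : 0 ≤ c) (hcx : c < t * x) : c < x :=
    hcx.trans_le
      (mul_le_of_le_one_left (pos_of_mul_pos_right (hc.trans_lt hcx) ht.le).le ht1)
  have hpow (i : Fin N) : |t * fComp A m u i| ^ p = t ^ p * |fComp A m u i| ^ p := by
    rw [abs_mul, abs_of_pos ht, Real.mul_rpow ht.le (abs_nonneg _)]
  rcases hu_mem with hlt | ⟨i, hi⟩ | ⟨i, hi⟩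
  · exact Or.inl fun j => lt_of_lt_mul hε.le (hlt j)
  · exact Or.inr (Or.inl ⟨i, lt_of_lt_mul hε.le hi⟩)
  · have hcancel : ε * ∑ j, |fComp A m u j| ^ p < t * (u i * |fComp A m u i| ^ p) := by
      refine lt_of_mul_lt_mul_left ?_ (Real.rpow_nonneg ht.le p)
      simp only [hpow, ← Finset.mul_sum] at hi
      linarith
    exact Or.inr (Or.inr ⟨i, lt_of_lt_mul (by positivity) hcancel⟩)

end Normalization

theorem exists_large_f_of_small_v_general {N : ℕ} {p κ : ℝ} (hp : 0 ≤ p) (hκ : 0 < κ) :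
    ∃ ε₀ σ : ℝ, 0 < ε₀ ∧ 0 < σ ∧
      ∀ (A : Matrix (Fin N) (Fin N) ℝ) (m : Fin N → ℝ), IsAdmissible κ A m →
        ∀ u : Fin N → ℝ, (∀ i, 0 ≤ u i) → (∑ i, |fComp A m u i| ^ p) ≠ 0 →
          (∑ i, u i * |fComp A m u i| ^ p) / (∑ i, |fComp A m u i| ^ p) < ε₀ →
          ∃ i, σ < fComp A m u i := by
  obtain ⟨ε, hε, h⟩ := exists_uniform_lt_or_lt_fComp_or_lt_mul N hp hκ
  refine ⟨ε, ε, hε, hε, fun A m hA u hu hg hv => ?_⟩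
  have hpow_nonneg (i : Fin N) : 0 ≤ |fComp A m u i| ^ p := Real.rpow_nonneg (abs_nonneg _) p
  have hg_pos : 0 < ∑ i, |fComp A m u i| ^ p :=
    (Finset.sum_nonneg fun i _ => hpow_nonneg i).lt_of_ne' hg
  rw [div_lt_iff₀ hg_pos] at hv
  rcases h A m hA u hu with hlt | hlarge | ⟨i, hi⟩
  · refine absurd hv (not_lt.mpr ?_)
    rw [Finset.mul_sum]
    exact Finset.sum_le_sum fun i _ => mul_le_mul_of_nonneg_right (hlt i).le (hpow_nonneg i)
  · exact hlarge
  · refine absurd hv (hi.le.trans ?_).not_gt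
    exact Finset.single_le_sum (f := fun i => u i * |fComp A m u i| ^ p)
      (fun i _ => mul_nonneg (hu i) (hpow_nonneg i)) (Finset.mem_univ i)

/-- There exist `ε₀ > 0` and `σ > 0` depending only on `N`, `p`, `κ` such that for every
admissible pair and every nonnegative `u` with `g(u) ≠ 0` and `v(u) < ε₀`, some component
satisfies `f_i(u) > σ`. -/
theorem exists_large_f_of_small_v {N : ℕ} (hN : 0 < N) (p κ : ℝ) (hp : 1 ≤ p) (hκ : 0 < κ) :
    ∃ ε₀ σ : ℝ, 0 < ε₀ ∧ 0 < σ ∧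
      ∀ (A : Matrix (Fin N) (Fin N) ℝ) (m : Fin N → ℝ), IsAdmissible κ A m →
        ∀ u : Fin N → ℝ, (∀ i, 0 ≤ u i) → (∑ i, |fComp A m u i| ^ p) ≠ 0 →
          (∑ i, u i * |fComp A m u i| ^ p) / (∑ i, |fComp A m u i| ^ p) < ε₀ →
          ∃ i, σ < fComp A m u i :=
  exists_large_f_of_small_v_general (zero_le_one.trans hp) hκ
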